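/- (Equi-expressivity of INL and the declarative fragment of InqML_⟹⊙) There exist a translation (·)* from instantial neighborhood logic formulas to declaratives of L_⟹⊙ and a translation (·)⋆ from declaratives of L_⟹⊙ to instantial neighborhood logic formulas such that for every neighborhood model M (empty neighborhoods allowed), every world w, every INL-formula σ, and every declarative α of L_⟹⊙: M,w ⊨_INL σ if and only if M,w ⊨ σ*, and M,w ⊨ α if and only if M,w ⊨_INL α⋆. -/

import Mathlib

/-- Formulas of the language `L_⟹⊙` (with the modal constant `⊙`). -/
inductive FormO (P : Type) : Type
  | atom : P → FormO P
  | bot : FormO P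
  | odot : FormO P
  | and : FormO P → FormO P → FormO P
  | impl : FormO P → FormO P → FormO P
  | idisj : FormO P → FormO P → FormO P
  | yields : FormO P → FormO P → FormO P

/-- A neighborhood model (empty neighborhoods allowed). -/
structure NModel (P : Type) where
  W : Type
  ne : Nonempty W
  Nb : W → Set (Set W)
  V : W → P → Bool

/-- Support of an `L_⟹⊙` formula at an information state. -/
def supportO {P : Type} (M : NModel P) : FormO P → Set M.W → Prop
  | .atom p, s => ∀ w ∈ s, M.V w p = true
  | .bot, s => s = ∅
  | .odot, s => ∀ w ∈ s, ∅ ∈ M.Nb w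
  | .and φ ψ, s => supportO M φ s ∧ supportO M ψ s
  | .impl φ ψ, s => ∀ t : Set M.W, t ⊆ s → supportO M φ t → supportO M ψ t
  | .idisj φ ψ, s => supportO M φ s ∨ supportO M ψ s
  | .yields φ ψ, s => ∀ w ∈ s, ∀ t ∈ M.Nb w, supportO M φ t → supportO M ψ t

/-- Truth at a world. -/
def truthO {P : Type} (M : NModel P) (w : M.W) (φ : FormO P) : Prop :=
  supportO M φ {w}

/-- Declaratives of `L_⟹⊙`: `⩔` occurs only within the scope of `⟹`. -/
inductive IsDeclO {P : Type} : FormO P → Prop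
  | atom (p : P) : IsDeclO (.atom p)
  | bot : IsDeclO .bot
  | odot : IsDeclO .odot
  | and {α β : FormO P} : IsDeclO α → IsDeclO β → IsDeclO (.and α β)
  | impl {α β : FormO P} : IsDeclO α → IsDeclO β → IsDeclO (.impl α β)
  | yields (φ ψ : FormO P) : IsDeclO (.yields φ ψ)

/-- Formulas of instantial neighborhood logic: `σ ::= p | ¬σ | σ∧σ |
□(ρ₁,…,ρₙ;σ)`. -/
inductive INLForm (P : Type) : Type
  | atom : P → INLForm P
  | neg : INLForm P → INLForm P
  | and : INLForm P → INLForm P → INLForm P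
  | box : List (INLForm P) → INLForm P → INLForm P

/-- Truth of an INL formula at a world. -/
def INLTrue {P : Type} (M : NModel P) : INLForm P → M.W → Prop
  | .atom p, w => M.V w p = true
  | .neg σ, w => ¬ INLTrue M σ w
  | .and ρ σ, w => INLTrue M ρ w ∧ INLTrue M σ w
  | .box ρs σ, w => ∃ s ∈ M.Nb w, (∀ v ∈ s, INLTrue M σ v) ∧
      ∀ ρ ∈ ρs, ∃ v ∈ s, INLTrue M ρ v

/-!
Support is persistent, so the negation `¬φ` is supported at `s` exactly when `φ` is false throughout
`s`. Hence a neighborhood which supports `σ` without supporting `⩔ᵢ ¬ρᵢ` is one on which `σ` is true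
everywhere and each `ρᵢ` somewhere, and `□(ρ₁,…,ρₙ;σ)` becomes `¬(σ ⟹ ⩔ᵢ ¬ρᵢ)`. For `n = 0` the
empty inquisitive disjunction `⊥` is supported at the empty neighborhood as well, which therefore
has to be added by hand through `⊙`.

Conversely, every formula of `L_⟹⊙`, declarative or not, is an inquisitive disjunction of finitely
many INL formulas, its resolutions: it is supported at `s` when one of them is true throughout `s`.
The only modal step is that `φ ⟹ ψ` says that no neighborhood on which a resolution of `φ` is true
everywhere can falsify every resolution of `ψ` somewhere, which is a conjunction of negated boxes.
-/

namespace FormO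

variable {P : Type}

/-- The abbreviation `¬φ := φ → ⊥`. -/
def neg (φ : FormO P) : FormO P := .impl φ .bot

/-- The classical disjunction `φ ∨ ψ := ¬(¬φ ∧ ¬ψ)`. -/
def or (φ ψ : FormO P) : FormO P := neg (.and (neg φ) (neg ψ))

/-- The modality `⟐φ := ¬(φ ⟹ ⊥)`. -/
def diamond (φ : FormO P) : FormO P := neg (.yields φ .bot)

/-- The modality `⟐_⊙φ := ⟐φ ∨ ⊙`. -/
def diamondOdot (φ : FormO P) : FormO P := or (diamond φ) .odot

/-- The inquisitive disjunction `⩔` of a nonempty list, given by its head and its tail; the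
head is the last disjunct. -/
def listIdisj (φ : FormO P) (φs : List (FormO P)) : FormO P := φs.foldr .idisj φ

/-- The counterpart in `L_⟹⊙` of the instantial box `□(ψ₁,…,ψₙ;φ)`. -/
def instBox : List (FormO P) → FormO P → FormO P
  | [], φ => diamondOdot φ
  | ψ :: ψs, φ => neg (.yields φ (listIdisj (neg ψ) (ψs.map neg)))

end FormO

section Support

variable {P : Type} {M : NModel P} {φ ψ : FormO P} {s t : Set M.W} {w : M.W}

theorem supportO.mono (hs : supportO M φ s) (hts : t ⊆ s) : supportO M φ t := by
  induction φ with
  | atom | odot | yields => exact fun w hw => hs w (hts hw)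
  | bot => exact Set.subset_eq_empty hts hs
  | and φ ψ ihφ ihψ => exact ⟨ihφ hs.1, ihψ hs.2⟩
  | impl φ ψ => exact fun u hu => hs u (hu.trans hts)
  | idisj φ ψ ihφ ihψ => exact hs.imp ihφ ihψ

theorem supportO_empty (M : NModel P) (φ : FormO P) : supportO M φ ∅ := by
  induction φ with
  | atom | odot | yields => exact fun w hw => hw.elim
  | bot => rfl
  | and _ _ ihφ ihψ => exact ⟨ihφ, ihψ⟩
  | impl _ _ _ ihψ => exact fun t ht _ => ihψ.mono ht
  | idisj _ _ ihφ => exact .inl ihφ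

theorem supportO_neg : supportO M φ.neg s ↔ ∀ w ∈ s, ¬ truthO M w φ := by
  constructor
  · intro h w hw hφ
    exact Set.singleton_ne_empty w (h {w} (Set.singleton_subset_iff.2 hw) hφ)
  · intro h t hts hφ
    exact Set.eq_empty_of_forall_notMem fun w hw =>
      h w (hts hw) (hφ.mono (Set.singleton_subset_iff.2 hw))

theorem truthO_neg : truthO M w φ.neg ↔ ¬ truthO M w φ := by
  rw [truthO, supportO_neg]
  simp only [Set.mem_singleton_iff, forall_eq]

theorem truthO_and : truthO M w (.and φ ψ) ↔ truthO M w φ ∧ truthO M w ψ := Iff.rfl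

theorem truthO_odot : truthO M w .odot ↔ ∅ ∈ M.Nb w := by
  simp only [truthO, supportO, Set.mem_singleton_iff, forall_eq]

theorem truthO_yields :
    truthO M w (.yields φ ψ) ↔ ∀ t ∈ M.Nb w, supportO M φ t → supportO M ψ t := by
  simp only [truthO, supportO, Set.mem_singleton_iff, forall_eq]

theorem truthO_or : truthO M w (φ.or ψ) ↔ truthO M w φ ∨ truthO M w ψ := by
  rw [FormO.or, truthO_neg, truthO_and, truthO_neg, truthO_neg, or_iff_not_and_not]

theorem truthO_neg_yields :
    truthO M w (FormO.yields φ ψ).neg ↔ ∃ t ∈ M.Nb w, supportO M φ t ∧ ¬ supportO M ψ t := by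
  rw [truthO_neg, truthO_yields]
  push Not
  rfl

theorem truthO_diamond :
    truthO M w φ.diamond ↔ ∃ t ∈ M.Nb w, supportO M φ t ∧ t.Nonempty := by
  simp only [FormO.diamond, truthO_neg_yields, supportO, Set.nonempty_iff_ne_empty, ne_eq]

theorem truthO_diamondOdot : truthO M w φ.diamondOdot ↔ ∃ t ∈ M.Nb w, supportO M φ t := by
  rw [FormO.diamondOdot, truthO_or, truthO_diamond, truthO_odot]
  constructor
  · rintro (⟨t, ht, hφ, -⟩ | hempty)
    · exact ⟨t, ht, hφ⟩
    · exact ⟨∅, hempty, supportO_empty M φ⟩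
  · rintro ⟨t, ht, hφ⟩
    rcases t.eq_empty_or_nonempty with rfl | hne
    · exact .inr ht
    · exact .inl ⟨t, ht, hφ, hne⟩

theorem supportO_listIdisj {φs : List (FormO P)} :
    supportO M (.listIdisj φ φs) s ↔ ∃ ψ ∈ φ :: φs, supportO M ψ s := by
  induction φs with
  | nil => simp [FormO.listIdisj]
  | cons χ φs ih =>
    change supportO M χ s ∨ supportO M (.listIdisj φ φs) s ↔ _
    simp only [ih, List.exists_mem_cons_iff, or_left_comm]

theorem truthO_instBox {ψs : List (FormO P)} :
    truthO M w (.instBox ψs φ) ↔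
      ∃ s ∈ M.Nb w, supportO M φ s ∧ ∀ ψ ∈ ψs, ∃ v ∈ s, truthO M v ψ := by
  cases ψs with
  | nil => simp [FormO.instBox, truthO_diamondOdot]
  | cons ψ ψs =>
    rw [FormO.instBox, truthO_neg_yields]
    simp only [supportO_listIdisj, ← List.map_cons (f := FormO.neg), not_exists, not_and,
      List.forall_mem_map, supportO_neg, not_forall, not_not, exists_prop]

end Support

namespace IsDeclO

variable {P : Type} {α : FormO P}

theorem supportO_iff {M : NModel P} {s : Set M.W} (hα : IsDeclO α) :
    supportO M α s ↔ ∀ w ∈ s, truthO M w α := by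
  refine ⟨fun h w hw => h.mono (Set.singleton_subset_iff.2 hw), fun h => ?_⟩
  induction hα generalizing s with
  | atom | odot | yields => exact fun w hw => h w hw w rfl
  | bot => exact Set.eq_empty_of_forall_notMem fun w hw => Set.singleton_ne_empty w (h w hw)
  | and _ _ ihα ihβ => exact ⟨ihα fun w hw => (h w hw).1, ihβ fun w hw => (h w hw).2⟩
  | impl _ _ _ ihβ =>
    intro t hts hα
    exact ihβ fun w hw =>
      h w (hts hw) {w} subset_rfl (hα.mono (Set.singleton_subset_iff.2 hw))

theorem neg (hα : IsDeclO α) : IsDeclO α.neg := .impl hα .bot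

theorem instBox (ψs : List (FormO P)) (φ : FormO P) : IsDeclO (.instBox ψs φ) := by
  cases ψs with
  | nil => exact (IsDeclO.and (IsDeclO.yields φ .bot).neg.neg IsDeclO.odot.neg).neg
  | cons => exact (IsDeclO.yields _ _).neg

end IsDeclO

section ToDeclarative

variable {P : Type}

@[elab_as_elim, induction_eliminator]
theorem INLForm.induction {motive : INLForm P → Prop} (atom : ∀ p, motive (.atom p))
    (neg : ∀ σ, motive σ → motive (.neg σ))
    (and : ∀ ρ σ, motive ρ → motive σ → motive (.and ρ σ))
    (box : ∀ ρs σ, (∀ ρ ∈ ρs, motive ρ) → motive σ → motive (.box ρs σ)) :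
    ∀ σ, motive σ
  | .atom p => atom p
  | .neg σ => neg σ (INLForm.induction atom neg and box σ)
  | .and ρ σ =>
    and ρ σ (INLForm.induction atom neg and box ρ) (INLForm.induction atom neg and box σ)
  | .box ρs σ =>
    box ρs σ (fun ρ _ => INLForm.induction atom neg and box ρ)
      (INLForm.induction atom neg and box σ)

/-- The translation `(·)*` of INL formulas into declaratives of `L_⟹⊙`. -/
def INLForm.toDecl : INLForm P → FormO P
  | .atom p => .atom p
  | .neg σ => σ.toDecl.neg
  | .and ρ σ => .and ρ.toDecl σ.toDecl
  | .box ρs σ => .instBox (ρs.map toDecl) σ.toDecl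

theorem INLForm.isDeclO_toDecl (σ : INLForm P) : IsDeclO σ.toDecl := by
  induction σ with
  | atom p => rw [toDecl]; exact .atom p
  | neg σ ih => rw [toDecl]; exact ih.neg
  | and ρ σ ihρ ihσ => rw [toDecl]; exact .and ihρ ihσ
  | box ρs σ => rw [toDecl]; exact .instBox _ _

theorem inlTrue_iff_truthO_toDecl {M : NModel P} {σ : INLForm P} {w : M.W} :
    INLTrue M σ w ↔ truthO M w σ.toDecl := by
  induction σ generalizing w with
  | atom p =>
    simp only [INLTrue, INLForm.toDecl, truthO, supportO, Set.mem_singleton_iff, forall_eq]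
  | neg σ ih => rw [INLTrue, INLForm.toDecl, truthO_neg, ih]
  | and ρ σ ihρ ihσ => rw [INLTrue, INLForm.toDecl, truthO_and, ihρ, ihσ]
  | box ρs σ ihρs ihσ =>
    have hinst (s : Set M.W) : (∀ ρ ∈ ρs, ∃ v ∈ s, INLTrue M ρ v) ↔
        ∀ ρ ∈ ρs, ∃ v ∈ s, truthO M v ρ.toDecl :=
      forall₂_congr fun ρ hρ => exists_congr fun v => and_congr_right fun _ => ihρs ρ hρ
    simp only [INLTrue, INLForm.toDecl, truthO_instBox, σ.isDeclO_toDecl.supportO_iff,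
      List.forall_mem_map, ihσ, hinst]

end ToDeclarative

namespace INLForm

variable {P : Type}

/-- Material implication, as the abbreviation `¬(ρ ∧ ¬σ)`. -/
def imp (ρ σ : INLForm P) : INLForm P := .neg (.and ρ (.neg σ))

/-- The INL rendering `¬□(¬τ₁,…,¬τₙ;ρ)` of `ρ ⟹ τ₁ ⩔ … ⩔ τₙ`. -/
def yields (ρ : INLForm P) (τs : List (INLForm P)) : INLForm P := .neg (.box (τs.map .neg) ρ)

variable [Inhabited P]

/-- Falsity. INL has no constant for it, so it is built as a contradiction from some atom. -/
def bot : INLForm P := .and (.atom default) (.neg (.atom default))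

/-- Conjunction of a finite list of formulas, ended by `¬⊥`. -/
def listConj : List (INLForm P) → INLForm P := List.foldr .and (.neg bot)

/-- Disjunction of a finite list of formulas, by De Morgan from its conjunction. -/
def listDisj (σs : List (INLForm P)) : INLForm P := .neg (listConj (σs.map .neg))

end INLForm

/-- Some formula of a list is true throughout an information state: the support condition of the
inquisitive disjunction of the list. -/
def SomeTrueOn {P : Type} (M : NModel P) (σs : List (INLForm P)) (s : Set M.W) : Prop :=
  ∃ σ ∈ σs, ∀ w ∈ s, INLTrue M σ w

section InstantialTruth

variable {P : Type} {M : NModel P} {w : M.W} {ρ σ : INLForm P} {ρs σs : List (INLForm P)}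
  {s t : Set M.W}

theorem inlTrue_imp : INLTrue M (ρ.imp σ) w ↔ (INLTrue M ρ w → INLTrue M σ w) := by
  simp only [INLForm.imp, INLTrue, not_and, not_not]

theorem inlTrue_yields :
    INLTrue M (ρ.yields σs) w ↔
      ∀ s ∈ M.Nb w, (∀ v ∈ s, INLTrue M ρ v) → SomeTrueOn M σs s := by
  simp only [INLForm.yields, INLTrue, List.forall_mem_map, SomeTrueOn]
  push Not
  rfl

theorem SomeTrueOn.mono (hs : SomeTrueOn M σs s) (hts : t ⊆ s) : SomeTrueOn M σs t := by
  obtain ⟨σ, hσ, hσs⟩ := hs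
  exact ⟨σ, hσ, fun w hw => hσs w (hts hw)⟩

theorem someTrueOn_singleton : SomeTrueOn M [σ] s ↔ ∀ w ∈ s, INLTrue M σ w := by
  simp only [SomeTrueOn, List.mem_singleton, exists_eq_left]

theorem someTrueOn_map {α : Type*} {f : α → INLForm P} {l : List α} :
    SomeTrueOn M (l.map f) s ↔ ∃ a ∈ l, ∀ w ∈ s, INLTrue M (f a) w := by
  simp only [SomeTrueOn, List.mem_map, exists_exists_and_eq_and]

theorem someTrueOn_append :
    SomeTrueOn M (ρs ++ σs) s ↔ SomeTrueOn M ρs s ∨ SomeTrueOn M σs s := by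
  simp only [SomeTrueOn, List.mem_append, or_and_right, exists_or]

theorem someTrueOn_map_and_product :
    SomeTrueOn M ((ρs ×ˢ σs).map fun ρσ => .and ρσ.1 ρσ.2) s ↔
      SomeTrueOn M ρs s ∧ SomeTrueOn M σs s := by
  simp only [someTrueOn_map, INLTrue, Prod.exists, List.mem_product]
  constructor
  · rintro ⟨ρ, σ, ⟨hρ, hσ⟩, h⟩
    exact ⟨⟨ρ, hρ, fun w hw => (h w hw).1⟩, σ, hσ, fun w hw => (h w hw).2⟩
  · rintro ⟨⟨ρ, hρ, hρs⟩, σ, hσ, hσs⟩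
    exact ⟨ρ, σ, ⟨hρ, hσ⟩, fun w hw => ⟨hρs w hw, hσs w hw⟩⟩

theorem someTrueOn_map_imp :
    SomeTrueOn M (σs.map ρ.imp) s ↔ SomeTrueOn M σs {w ∈ s | INLTrue M ρ w} := by
  rw [someTrueOn_map]
  simp only [SomeTrueOn, inlTrue_imp, Set.mem_sep_iff, and_imp]

variable [Inhabited P]

theorem not_inlTrue_bot : ¬ INLTrue M .bot w := by
  simp only [INLForm.bot, INLTrue, and_not_self, not_false_eq_true]

theorem inlTrue_listConj : INLTrue M (.listConj σs) w ↔ ∀ σ ∈ σs, INLTrue M σ w := by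
  induction σs with
  | nil => simp [INLForm.listConj, INLTrue, not_inlTrue_bot]
  | cons σ σs ih =>
    change INLTrue M (.and σ (.listConj σs)) w ↔ _
    rw [INLTrue, ih, List.forall_mem_cons]

theorem inlTrue_listDisj : INLTrue M (.listDisj σs) w ↔ ∃ σ ∈ σs, INLTrue M σ w := by
  simp only [INLForm.listDisj, INLTrue, inlTrue_listConj, List.forall_mem_map]
  push Not
  rfl

theorem inlTrue_box_nil_bot : INLTrue M (.box [] .bot) w ↔ ∅ ∈ M.Nb w := by
  simp [INLTrue, not_inlTrue_bot, ← Set.eq_empty_iff_forall_notMem]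

end InstantialTruth

theorem exists_mem_sections_forall_mem_iff {α : Type*} {L : List (List α)} {p : α → Prop} :
    (∃ f ∈ L.sections, ∀ a ∈ f, p a) ↔ ∀ l ∈ L, ∃ a ∈ l, p a := by
  induction L with
  | nil => simp
  | cons l L ih =>
    rw [List.forall_mem_cons, ← ih]
    simp only [List.sections, List.mem_flatMap, List.mem_map]
    constructor
    · rintro ⟨_, ⟨f, hf, a, ha, rfl⟩, h⟩
      obtain ⟨hpa, hpf⟩ := List.forall_mem_cons.1 h
      exact ⟨⟨a, ha, hpa⟩, f, hf, hpf⟩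
    · rintro ⟨⟨a, ha, hpa⟩, f, hf, hpf⟩
      exact ⟨a :: f, ⟨f, hf, a, ha, rfl⟩, List.forall_mem_cons.2 ⟨hpa, hpf⟩⟩

section Resolutions

variable {P : Type} [Inhabited P] {M : NModel P}

theorem someTrueOn_map_listConj_sections {L : List (List (INLForm P))} {s : Set M.W} :
    SomeTrueOn M (L.sections.map .listConj) s ↔ ∀ σs ∈ L, SomeTrueOn M σs s := by
  have hconj (f : List (INLForm P)) :
      (∀ w ∈ s, INLTrue M (.listConj f) w) ↔ ∀ σ ∈ f, ∀ w ∈ s, INLTrue M σ w := by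
    simp only [inlTrue_listConj]
    exact ⟨fun h σ hσ w hw => h w hw σ hσ, fun h w hw σ hσ => h σ hσ w hw⟩
  rw [someTrueOn_map]
  simp only [SomeTrueOn, hconj, exists_mem_sections_forall_mem_iff]

/-- The resolutions of a formula of `L_⟹⊙`, directly as INL formulas. A resolution of `φ → ψ`
chooses for each resolution `ρ` of `φ` a resolution `τ` of `ψ` and is the conjunction of the
implications from `ρ` to `τ`; these choices are the sections of the list of lists below. -/
def FormO.resolutions : FormO P → List (INLForm P)
  | .atom p => [.atom p]
  | .bot => [.bot]
  | .odot => [.box [] .bot]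
  | .and φ ψ => (φ.resolutions ×ˢ ψ.resolutions).map fun ρσ => .and ρσ.1 ρσ.2
  | .impl φ ψ => (φ.resolutions.map fun ρ => ψ.resolutions.map ρ.imp).sections.map .listConj
  | .idisj φ ψ => φ.resolutions ++ ψ.resolutions
  | .yields φ ψ => [.listConj (φ.resolutions.map fun ρ => ρ.yields ψ.resolutions)]

theorem supportO_iff_someTrueOn_resolutions {φ : FormO P} {s : Set M.W} :
    supportO M φ s ↔ SomeTrueOn M φ.resolutions s := by
  induction φ generalizing s with
  | atom p => simp only [FormO.resolutions, someTrueOn_singleton, supportO, INLTrue]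
  | bot =>
    simp only [FormO.resolutions, someTrueOn_singleton, supportO, not_inlTrue_bot,
      Set.eq_empty_iff_forall_notMem, imp_false]
  | odot => simp only [FormO.resolutions, someTrueOn_singleton, supportO, inlTrue_box_nil_bot]
  | and φ ψ ihφ ihψ => rw [FormO.resolutions, someTrueOn_map_and_product, supportO, ihφ, ihψ]
  | impl φ ψ ihφ ihψ =>
    simp only [FormO.resolutions, someTrueOn_map_listConj_sections, List.forall_mem_map,
      someTrueOn_map_imp, supportO, ihφ, ihψ]
    constructor
    · intro h ρ hρ
      exact h {w ∈ s | INLTrue M ρ w} (Set.sep_subset _ _) ⟨ρ, hρ, fun w hw => hw.2⟩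
    · rintro h t hts ⟨ρ, hρ, hρt⟩
      exact (h ρ hρ).mono fun w hw => ⟨hts hw, hρt w hw⟩
  | idisj φ ψ ihφ ihψ => rw [FormO.resolutions, someTrueOn_append, supportO, ihφ, ihψ]
  | yields φ ψ ihφ ihψ =>
    simp only [FormO.resolutions, someTrueOn_singleton, inlTrue_listConj, List.forall_mem_map,
      inlTrue_yields, supportO, ihφ, ihψ]
    refine forall₂_congr fun w _ => ⟨?_, ?_⟩
    · exact fun h ρ hρ t ht hρt => h t ht ⟨ρ, hρ, hρt⟩
    · rintro h t ht ⟨ρ, hρ, hρt⟩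
      exact h ρ hρ t ht hρt

/-- The translation `(·)⋆` into INL, defined on all formulas of `L_⟹⊙`, not just on declaratives:
at a single world, inquisitive disjunction is ordinary disjunction. -/
def FormO.toINL (φ : FormO P) : INLForm P := .listDisj φ.resolutions

theorem truthO_iff_inlTrue_toINL {φ : FormO P} {w : M.W} :
    truthO M w φ ↔ INLTrue M φ.toINL w := by
  simp only [truthO, supportO_iff_someTrueOn_resolutions, SomeTrueOn, FormO.toINL, inlTrue_listDisj,
    Set.mem_singleton_iff, forall_eq]

end Resolutions

theorem inl_equiexpressive_general {P : Type} [Nonempty P] :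
    ∃ (tr₁ : INLForm P → FormO P) (tr₂ : FormO P → INLForm P),
      (∀ σ : INLForm P, IsDeclO (tr₁ σ)) ∧
      (∀ (M : NModel P) (w : M.W) (σ : INLForm P), INLTrue M σ w ↔ truthO M w (tr₁ σ)) ∧
      (∀ (M : NModel P) (w : M.W) (φ : FormO P), truthO M w φ ↔ INLTrue M (tr₂ φ) w) := by
  inhabit P
  exact ⟨INLForm.toDecl, FormO.toINL, INLForm.isDeclO_toDecl,
    fun _ _ _ => inlTrue_iff_truthO_toDecl, fun _ _ _ => truthO_iff_inlTrue_toINL⟩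

/-- INL and the declarative fragment of `InqML_⟹⊙` are
equi-expressive: there are truth-preserving translations in both directions. -/
theorem inl_equiexpressive {P : Type} [Nonempty P] :
    ∃ (tr₁ : INLForm P → FormO P) (tr₂ : FormO P → INLForm P),
      (∀ σ : INLForm P, IsDeclO (tr₁ σ)) ∧
      (∀ (M : NModel P) (w : M.W) (σ : INLForm P),
        INLTrue M σ w ↔ truthO M w (tr₁ σ)) ∧
      (∀ (M : NModel P) (w : M.W) (α : FormO P), IsDeclO α →
        (truthO M w α ↔ INLTrue M (tr₂ α) w)) := by
  obtain ⟨tr₁, tr₂, hdecl, htr₁, htr₂⟩ := inl_equiexpressive_general (P := P)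
  exact ⟨tr₁, tr₂, hdecl, htr₁, fun M w α _ => htr₂ M w α⟩
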